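/- arXiv:math/0703630 — 3 statements merged into one kernel-verified Lean document; each statement's English description precedes it below -/
import Mathlib

section
/- Let (U,ρ) be a complete metric space, let p ≥ 1, and let f ∈ W̃(ℝ,U) ∩ M*_p(ℝ,U). Then for every ε' > 0 there exists ε > 0 such that P^{(ρ)}_p(ε'; f) ⊇ P^{(ρ')}_1(ε; f); that is, every (ε, D^{(ρ')}_1)-almost period of f is an (ε', D^{(ρ)}_p)-almost period of f. -/
open MeasureTheory Filter Topology TopologicalSpace
open scoped ENNReal Pointwise

noncomputable section

/-- The truncated ("bounded") distance `ρ'(x,y) = min {1, ρ(x,y)}` on a metric space. -/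
def bdist {α : Type*} [PseudoMetricSpace α] : α → α → ℝ := fun x y => min 1 (dist x y)

/-- The Hausdorff distance `dist_{ρ'}` (corresponding to the truncated metric `ρ'`)
between non-empty closed subsets of a metric space. -/
def clDist {α : Type*} [MetricSpace α] : Closeds α → Closeds α → ℝ :=
  fun A B => (min 1 (EMetric.hausdorffEdist (A : Set α) (B : Set α))).toReal

/-- The Hausdorff distance `dist_ρ` between (non-empty closed bounded) subsets. -/
def clbDist {α : Type*} [MetricSpace α] : Closeds α → Closeds α → ℝ :=
  fun A B => Metric.hausdorffDist (A : Set α) (B : Set α)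

/-- `D^{(d)}_{p,l}(f,g) = ( sup_ξ (1/l) ∫_ξ^{ξ+l} d(f t, g t)^p dt )^{1/p}`,
valued in `ℝ≥0∞`. -/
def weylD {α : Type*} (d : α → α → ℝ) (p l : ℝ) (f g : ℝ → α) : ℝ≥0∞ :=
  (⨆ ξ : ℝ, ENNReal.ofReal (1 / l) *
      ∫⁻ t in Set.Icc ξ (ξ + l), ENNReal.ofReal (d (f t) (g t) ^ p)) ^ (1 / p)

/-- The Weyl semimetric `D^{(d)}_p(f,g) = lim_{l → +∞} D^{(d)}_{p,l}(f,g)`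
(the limit exists; it is formalized here as a `limsup`). -/
def weylDinf {α : Type*} (d : α → α → ℝ) (p : ℝ) (f g : ℝ → α) : ℝ≥0∞ :=
  Filter.limsup (fun l => weylD d p l f g) Filter.atTop

/-- Membership in `M_p(ℝ, α)`: `f` is (strongly) measurable and
`sup_ξ ∫_ξ^{ξ+1} d(f t, x₀)^p dt < +∞`. -/
def MemMp {α : Type*} [TopologicalSpace α] (d : α → α → ℝ) (p : ℝ) (x₀ : α)
    (f : ℝ → α) : Prop :=
  AEStronglyMeasurable f MeasureTheory.volume ∧
  ∃ C : ℝ, ∀ ξ : ℝ,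
    (∫⁻ t in Set.Icc ξ (ξ + 1), ENNReal.ofReal (d (f t) x₀ ^ p)) ≤ ENNReal.ofReal C

/-- A set `T ⊆ ℝ` is relatively dense. -/
def RelDense (T : Set ℝ) : Prop := ∃ a > 0, ∀ ξ : ℝ, (Set.Icc ξ (ξ + a) ∩ T).Nonempty

/-- The set of `(ε, D^{(d)}_{p,l})`-almost periods of `f`. -/
def APeriodsL {α : Type*} (d : α → α → ℝ) (p l ε : ℝ) (f : ℝ → α) : Set ℝ :=
  {τ | weylD d p l f (fun t => f (t + τ)) < ENNReal.ofReal ε}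

/-- The set `P^{(d)}_p(ε; f)` of `(ε, D^{(d)}_p)`-almost periods of `f`. -/
def APeriods {α : Type*} (d : α → α → ℝ) (p ε : ℝ) (f : ℝ → α) : Set ℝ :=
  {τ | weylDinf d p f (fun t => f (t + τ)) < ENNReal.ofReal ε}

/-- Membership in the space `W_p(ℝ, α)` of Weyl almost periodic functions of order `p`
w.r.t. the distance `d` (with distinguished point `x₀`). -/
def MemWp {α : Type*} [TopologicalSpace α] (d : α → α → ℝ) (p : ℝ) (x₀ : α)
    (f : ℝ → α) : Prop :=
  MemMp d p x₀ f ∧ ∀ ε > 0, ∃ l > 0, RelDense (APeriodsL d p l ε f)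

/-- The module `Mod f`: the additive group of all `λ ∈ ℝ` such that `e^{iλτ_j} → 1`
for every `f`-returning sequence `{τ_j}` (a sequence with `D^{(d)}_1(f, f(·+τ_j)) → 0`,
where `d` is the relevant bounded distance). -/
def WMod {α : Type*} (d : α → α → ℝ) (f : ℝ → α) : Set ℝ :=
  {lam : ℝ | ∀ τ : ℕ → ℝ,
    Tendsto (fun j => weylDinf d 1 f (fun t => f (t + τ j))) atTop (nhds 0) →
    Tendsto (fun j => Complex.exp (Complex.I * ((lam * τ j : ℝ) : ℂ))) atTop (nhds 1)}

/-- `κ_W(T) = lim_{l → +∞} sup_ξ (1/l) meas([ξ, ξ+l] ∩ T)` (formalized as a `limsup`). -/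
def kappaW (T : Set ℝ) : ℝ≥0∞ :=
  Filter.limsup (fun l : ℝ => ⨆ ξ : ℝ,
    ENNReal.ofReal (1 / l) * MeasureTheory.volume (Set.Icc ξ (ξ + l) ∩ T)) Filter.atTop

/-- Membership in `M*_p(ℝ, α)`. -/
def MemMpStar {α : Type*} [TopologicalSpace α] (d : α → α → ℝ) (p : ℝ) (x₀ : α)
    (f : ℝ → α) : Prop :=
  MemMp d p x₀ f ∧
  ∀ ε > 0, ∃ δ > 0, ∀ T : Set ℝ, MeasurableSet T → kappaW T < ENNReal.ofReal δ →
    Filter.limsup (fun l : ℝ => ⨆ ξ : ℝ, ENNReal.ofReal (1 / l) *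
        ∫⁻ t in Set.Icc ξ (ξ + l) ∩ T, ENNReal.ofReal (d (f t) x₀ ^ p)) Filter.atTop
      < ENNReal.ofReal ε

/-- Distance from a point to a set w.r.t. the distance `d`, valued in `ℝ≥0∞`
(`∞` for the empty set). -/
def dInfDist {α : Type*} (d : α → α → ℝ) (x : α) (K : Set α) : ℝ≥0∞ :=
  ⨅ y ∈ K, ENNReal.ofReal (d x y)

/-- Membership in `W̃_p(ℝ, α)`: conditions 1) (relatively dense sets of
`(ε, D^{(d)}_p)`-almost periods) and 2) (approximate compactness of values). -/
def MemWpTilde {α : Type*} [TopologicalSpace α] (d : α → α → ℝ) (p : ℝ) (x₀ : α)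
    (f : ℝ → α) : Prop :=
  MemMp d p x₀ f ∧
  (∀ ε > 0, RelDense (APeriods d p ε f)) ∧
  (∀ ε > 0, ∀ δ > 0, ∃ K : Set α, IsCompact K ∧
      kappaW {t | ENNReal.ofReal ε ≤ dInfDist d (f t) K} < ENNReal.ofReal δ)

/-- The support of a Borel measure on a topological space. -/
def measSupport {α : Type*} [TopologicalSpace α] [MeasurableSpace α]
    (μ : Measure α) : Set α :=
  {x | ∀ V : Set α, IsOpen V → x ∈ V → 0 < μ V}

/-- `r_δ(x, μ) = inf { r > 0 : μ[U_r(x)] > δ }`. -/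
def rdelta {α : Type*} [PseudoMetricSpace α] [MeasurableSpace α]
    (x : α) (μ : Measure α) (δ : ℝ) : ℝ :=
  sInf {r : ℝ | 0 < r ∧ ENNReal.ofReal δ < μ (Metric.ball x r)}

/-- The Lévy–Prokhorov distance on Borel probability measures. -/
def lpDist {α : Type*} [MeasurableSpace α] [PseudoEMetricSpace α] :
    ProbabilityMeasure α → ProbabilityMeasure α → ℝ :=
  fun μ ν => MeasureTheory.levyProkhorovDist (μ : Measure α) (ν : Measure α)

end

/-- Supremum over windows of length `l` of the mean of `F`. -/
noncomputable def wMean (F : ℝ → ℝ≥0∞) (l : ℝ) : ℝ≥0∞ :=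
  ⨆ ξ : ℝ, ENNReal.ofReal (1 / l) * ∫⁻ t in Set.Icc ξ (ξ + l), F t

lemma wMean_mono_ae {F G : ℝ → ℝ≥0∞} (h : ∀ᵐ t, F t ≤ G t) (l : ℝ) :
    wMean F l ≤ wMean G l := by
  unfold wMean
  refine iSup_mono fun ξ => ?_
  exact mul_le_mul_right (lintegral_mono_ae (ae_restrict_of_ae h)) _

lemma wMean_const_mul {c : ℝ≥0∞} (hc : c ≠ ∞) (F : ℝ → ℝ≥0∞) (l : ℝ) :
    wMean (fun t => c * F t) l = c * wMean F l := by
  unfold wMean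
  rw [ENNReal.mul_iSup]
  refine iSup_congr fun ξ => ?_
  rw [lintegral_const_mul' _ _ hc]
  ring

lemma wMean_add_le {F : ℝ → ℝ≥0∞} (hF : AEMeasurable F volume) (G : ℝ → ℝ≥0∞) (l : ℝ) :
    wMean (fun t => F t + G t) l ≤ wMean F l + wMean G l := by
  refine iSup_le fun ξ => ?_
  rw [lintegral_add_left' hF.restrict, mul_add]
  exact add_le_add (le_iSup (fun ξ : ℝ => ENNReal.ofReal (1 / l) *
    ∫⁻ t in Set.Icc ξ (ξ + l), F t) ξ) (le_iSup (fun ξ : ℝ => ENNReal.ofReal (1 / l) *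
    ∫⁻ t in Set.Icc ξ (ξ + l), G t) ξ)

lemma wMean_const (c : ℝ≥0∞) {l : ℝ} (hl : 0 < l) : wMean (fun _ => c) l ≤ c := by
  refine iSup_le fun ξ => ?_
  rw [setLIntegral_const, Real.volume_Icc, add_sub_cancel_left, mul_comm c, ← mul_assoc,
    ← ENNReal.ofReal_mul (by positivity), one_div, inv_mul_cancel₀ hl.ne']
  simp

lemma wMean_shift (F : ℝ → ℝ≥0∞) (τ l : ℝ) :
    wMean (fun t => F (t + τ)) l = wMean F l := by
  unfold wMean
  rw [← (Equiv.addRight τ).iSup_comp (g := fun ξ : ℝ => ENNReal.ofReal (1 / l) *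
    ∫⁻ t in Set.Icc ξ (ξ + l), F t)]
  refine iSup_congr fun ξ => ?_
  congr 1
  have h := (measurePreserving_add_right volume τ).setLIntegral_comp_preimage_emb
    (measurableEmbedding_addRight τ) F (Set.Icc (ξ + τ) (ξ + τ + l))
  simp only [Equiv.coe_addRight]
  rw [← h]
  congr 2
  ext t
  simp only [Set.mem_Icc, Set.mem_preimage]
  constructor <;> rintro ⟨h1, h2⟩ <;> constructor <;> linarith

lemma kappaW_eq {T : Set ℝ} (hT : MeasurableSet T) :
    kappaW T = limsup (wMean (T.indicator 1)) atTop := by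
  unfold kappaW
  congr 1
  ext l
  refine iSup_congr fun ξ => ?_
  rw [lintegral_indicator_one hT, Measure.restrict_apply hT, Set.inter_comm]

lemma setmean_eq {T : Set ℝ} (hT : MeasurableSet T) (A : ℝ → ℝ≥0∞) :
    (fun l : ℝ => ⨆ ξ : ℝ, ENNReal.ofReal (1 / l) * ∫⁻ t in Set.Icc ξ (ξ + l) ∩ T, A t)
      = wMean (T.indicator A) := by
  ext l
  refine iSup_congr fun ξ => ?_
  rw [lintegral_indicator hT, Measure.restrict_restrict hT, Set.inter_comm]

lemma dist_rpow_bound {a b h p : ℝ} (ha : 0 ≤ a) (hb : 0 ≤ b) (h0 : 0 ≤ h) (hp : 1 ≤ p)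
    (hh : h ≤ a + b) : h ^ p ≤ 2 ^ p * (a ^ p + b ^ p) := by
  have h1 : h ≤ 2 * max a b := by
    have := le_max_left a b
    have := le_max_right a b
    linarith
  have hm : 0 ≤ max a b := le_max_of_le_left ha
  calc h ^ p ≤ (2 * max a b) ^ p := Real.rpow_le_rpow h0 h1 (by linarith)
    _ = 2 ^ p * (max a b) ^ p := Real.mul_rpow (by norm_num) hm
    _ ≤ _ := by
      have := Real.rpow_nonneg ha p
      have := Real.rpow_nonneg hb p
      gcongr
      rcases max_choice a b with h | h <;> rw [h] <;> linarith

/-- **Almost periods of functions in `W̃(ℝ,U) ∩ M*_p(ℝ,U)`.**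
If `f ∈ W̃(ℝ,U) ∩ M*_p(ℝ,U)`, then for every `ε' > 0` there is `ε > 0` such that
`P^{(ρ)}_p(ε'; f) ⊇ P^{(ρ')}₁(ε; f)`: every `(ε, D^{(ρ')}₁)`-almost period of `f` is an
`(ε', D^{(ρ)}_p)`-almost period of `f`. -/
theorem weyl_tilde_almost_periods {U : Type*} [MetricSpace U] [CompleteSpace U] (x₀ : U)
    (p : ℝ) (hp : 1 ≤ p) (f : ℝ → U)
    (hf : MemWpTilde bdist 1 x₀ f) (hfstar : MemMpStar dist p x₀ f) :
    ∀ ε' > (0 : ℝ), ∃ ε > (0 : ℝ),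
      APeriods bdist 1 ε f ⊆ APeriods dist p ε' f := by
  intro ε' hε'
  obtain ⟨⟨hfm, -⟩, hstar⟩ := hfstar
  have hp0 : 0 < p := by linarith
  set η : ℝ := min 1 (ε' / 2) with hη
  have hη0 : 0 < η := lt_min one_pos (by linarith)
  have hη1 : η ≤ 1 := min_le_left _ _
  set ε₀ : ℝ := ε' ^ p / (2 ^ p * 8) with hε₀
  have hεp : 0 < ε' ^ p := Real.rpow_pos_of_pos hε' p
  have h2p : (0 : ℝ) < 2 ^ p := Real.rpow_pos_of_pos (by norm_num) p
  have hε₀0 : 0 < ε₀ := by positivity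
  obtain ⟨δ, hδ, hδT⟩ := hstar ε₀ hε₀0
  refine ⟨δ * η, by positivity, ?_⟩
  intro τ hτ
  simp only [APeriods, Set.mem_setOf_eq] at hτ ⊢
  -- a strongly measurable representative
  set f' := hfm.mk f with hf'
  have hf'm : StronglyMeasurable f' := hfm.stronglyMeasurable_mk
  have hae : ∀ᵐ t, f t = f' t := hfm.ae_eq_mk
  have haeτ : ∀ᵐ t, f (t + τ) = f' (t + τ) :=
    (measurePreserving_add_right volume τ).quasiMeasurePreserving.ae hae
  have hshm : StronglyMeasurable (fun t => f' (t + τ)) :=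
    hf'm.comp_measurable (measurable_add_const τ)
  set T : Set ℝ := {t | η ≤ dist (f' t) (f' (t + τ))} with hTdef
  have hT : MeasurableSet T :=
    measurableSet_le measurable_const (hf'm.dist hshm).measurable
  set T' : Set ℝ := (fun t => t - τ) ⁻¹' T with hT'def
  have hT' : MeasurableSet T' := (measurable_sub_const τ) hT
  have hTT' : ∀ t, t + τ ∈ T' ↔ t ∈ T := fun t => by simp [hT'def]
  have hκ : kappaW T < ENNReal.ofReal δ := by
    have h1 : ∀ l, wMean (T.indicator 1) l ≤ ENNReal.ofReal (1 / η) *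
        weylD bdist 1 l f (fun t => f (t + τ)) := by
      intro l
      have : weylD bdist 1 l f (fun t => f (t + τ)) =
          wMean (fun t => ENNReal.ofReal (bdist (f t) (f (t + τ)))) l := by
        simp [weylD, wMean]
      rw [this, ← wMean_const_mul ENNReal.ofReal_ne_top]
      refine wMean_mono_ae ?_ l
      filter_upwards [hae, haeτ] with t h1 h2
      by_cases ht : t ∈ T
      · rw [Set.indicator_of_mem ht, h1, h2, ← ENNReal.ofReal_mul (by positivity)]
        simp only [Pi.one_apply]
        rw [← ENNReal.ofReal_one]
        apply ENNReal.ofReal_le_ofReal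
        have : η ≤ bdist (f' t) (f' (t + τ)) := le_min hη1 ht
        rw [div_mul_eq_mul_div, one_mul, le_div_iff₀ hη0]
        linarith
      · rw [Set.indicator_of_notMem ht]; exact zero_le
    rw [kappaW_eq hT]
    calc limsup (wMean (T.indicator 1)) atTop
        ≤ limsup (fun l => ENNReal.ofReal (1 / η) *
            weylD bdist 1 l f (fun t => f (t + τ))) atTop :=
          limsup_le_limsup (Eventually.of_forall h1)
      _ = ENNReal.ofReal (1 / η) * weylDinf bdist 1 f (fun t => f (t + τ)) :=
          ENNReal.limsup_const_mul_of_ne_top ENNReal.ofReal_ne_top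
      _ < ENNReal.ofReal (1 / η) * ENNReal.ofReal (δ * η) := by
          refine (ENNReal.mul_lt_mul_iff_right ?_ ENNReal.ofReal_ne_top).2 hτ
          simpa using hη0
      _ = ENNReal.ofReal δ := by
          rw [← ENNReal.ofReal_mul (by positivity)]
          congr 1
          field_simp
  have hκ' : kappaW T' < ENNReal.ofReal δ := by
    have : kappaW T' = kappaW T := by
      rw [kappaW_eq hT, kappaW_eq hT']
      congr 1
      ext l
      rw [← wMean_shift _ τ]
      congr 1
      ext t
      simp [Set.indicator, hTT']
    rwa [this]
  set A : ℝ → ℝ≥0∞ := fun t => ENNReal.ofReal (dist (f t) x₀ ^ p) with hA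
  have hAm : AEMeasurable A volume := by
    have h1 : AEMeasurable (fun t => dist (f t) x₀) volume :=
      (hfm.dist aestronglyMeasurable_const).aemeasurable
    exact (h1.pow_const p).ennreal_ofReal
  have e1 := eventually_lt_of_limsup_lt (hδT T hT hκ)
  have e2 := eventually_lt_of_limsup_lt (hδT T' hT' hκ')
  have s1 := setmean_eq hT A
  have s2 := setmean_eq hT' A
  have key : ∀ᵐ t, ENNReal.ofReal (dist (f t) (f (t + τ)) ^ p) ≤
      ENNReal.ofReal (η ^ p) + ENNReal.ofReal (2 ^ p) *
        (T.indicator A t + T'.indicator A (t + τ)) := by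
    filter_upwards [hae, haeτ] with t h1 h2
    by_cases ht : t ∈ T
    · refine le_add_left ?_
      rw [Set.indicator_of_mem ht, Set.indicator_of_mem ((hTT' t).2 ht)]
      simp only [hA]
      rw [← ENNReal.ofReal_add (by positivity) (by positivity),
        ← ENNReal.ofReal_mul (by positivity)]
      apply ENNReal.ofReal_le_ofReal
      exact dist_rpow_bound dist_nonneg dist_nonneg dist_nonneg hp (dist_triangle_right _ _ _)
    · refine le_add_right ?_
      apply ENNReal.ofReal_le_ofReal
      rw [h1, h2]
      exact Real.rpow_le_rpow dist_nonneg (le_of_lt (not_le.1 ht)) hp0.le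
  have hfin : ∀ᶠ l in atTop, weylD dist p l f (fun t => f (t + τ)) ≤
      ENNReal.ofReal ((3 / 4 * ε' ^ p) ^ (1 / p)) := by
    filter_upwards [e1, e2, eventually_gt_atTop 0] with l h1 h2 hl
    have h1' : wMean (T.indicator A) l < ENNReal.ofReal ε₀ := by rw [← s1]; exact h1
    have h2' : wMean (T'.indicator A) l < ENNReal.ofReal ε₀ := by rw [← s2]; exact h2
    rw [← ENNReal.ofReal_rpow_of_nonneg (by positivity) (by positivity)]
    refine ENNReal.rpow_le_rpow ?_ (by positivity)
    calc wMean (fun t => ENNReal.ofReal (dist (f t) (f (t + τ)) ^ p)) l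
        ≤ wMean (fun t => ENNReal.ofReal (η ^ p) + ENNReal.ofReal (2 ^ p) *
          (T.indicator A t + T'.indicator A (t + τ))) l := wMean_mono_ae key l
      _ ≤ wMean (fun t => ENNReal.ofReal (η ^ p)) l + wMean (fun t => ENNReal.ofReal (2 ^ p) *
          (T.indicator A t + T'.indicator A (t + τ))) l :=
          wMean_add_le aemeasurable_const _ l
      _ ≤ ENNReal.ofReal (η ^ p) + ENNReal.ofReal (2 ^ p) *
          (ENNReal.ofReal ε₀ + ENNReal.ofReal ε₀) := by
          rw [wMean_const_mul ENNReal.ofReal_ne_top]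
          refine add_le_add (wMean_const _ hl) (mul_le_mul_right ?_ _)
          refine (wMean_add_le (hAm.indicator hT) _ l).trans ?_
          rw [wMean_shift (T'.indicator A)]
          exact add_le_add h1'.le h2'.le
      _ ≤ ENNReal.ofReal (3 / 4 * ε' ^ p) := by
          rw [← ENNReal.ofReal_add (by positivity) (by positivity),
            ← ENNReal.ofReal_mul (by positivity),
            ← ENNReal.ofReal_add (by positivity) (by positivity)]
          apply ENNReal.ofReal_le_ofReal
          have i1 : η ^ p ≤ ε' ^ p / 2 := by
            calc η ^ p ≤ (ε' / 2) ^ p :=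
                  Real.rpow_le_rpow hη0.le (min_le_right _ _) hp0.le
              _ = ε' ^ p / 2 ^ p := Real.div_rpow hε'.le (by norm_num) p
              _ ≤ ε' ^ p / 2 := by
                  gcongr
                  simpa using Real.rpow_le_rpow_of_exponent_le (x := 2) (by norm_num) hp
          have i2 : (2 : ℝ) ^ p * (ε₀ + ε₀) = ε' ^ p / 4 := by
            rw [hε₀]; field_simp; norm_num
          linarith
  refine (limsup_le_of_le (by isBoundedDefault) hfin).trans_lt ?_
  rw [ENNReal.ofReal_lt_ofReal_iff hε']
  calc (3 / 4 * ε' ^ p) ^ (1 / p) < (ε' ^ p) ^ (1 / p) :=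
        Real.rpow_lt_rpow (by positivity) (by linarith) (by positivity)
    _ = ε' := by rw [one_div, Real.rpow_rpow_inv hε'.le hp0.ne']
end

section
/- Let U = ℝⁿ with the Euclidean metric |·|. Then every function f ∈ M_1(ℝ, ℝⁿ) satisfies the compactness condition 2) in the definition of W̃_p: for any ε, δ > 0 there exists a compact set K_{ε,δ} ⊆ ℝⁿ such that κ_W({ t ∈ ℝ : dist(f(t), K_{ε,δ}) ≥ ε }) < δ. -/
open MeasureTheory Filter Topology TopologicalSpace
open scoped ENNReal Pointwise

theorem unit_bound_aux {g : ℝ → ℝ} (hg : AEMeasurable (fun t => ENNReal.ofReal (g t)) volume)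
    {C R : ℝ} (hR : 0 < R)
    (h : ∀ ξ : ℝ, (∫⁻ t in Set.Icc ξ (ξ + 1), ENNReal.ofReal (g t)) ≤ ENNReal.ofReal C) (ξ : ℝ) :
    volume (Set.Icc ξ (ξ + 1) ∩ {t | ENNReal.ofReal R ≤ ENNReal.ofReal (g t)})
      ≤ ENNReal.ofReal (C / R) := by
  have h1 := mul_meas_ge_le_lintegral₀ (μ := volume.restrict (Set.Icc ξ (ξ + 1)))
    hg.restrict (ENNReal.ofReal R)
  rw [Measure.restrict_apply' measurableSet_Icc, Set.inter_comm] at h1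
  rw [ENNReal.ofReal_div_of_pos hR]
  rw [ENNReal.le_div_iff_mul_le (Or.inl (by simpa using hR)) (Or.inl ENNReal.ofReal_ne_top), mul_comm]
  exact h1.trans (h ξ)

theorem long_bound_aux {S : Set ℝ} {B : ℝ} (hB : 0 ≤ B)
    (h : ∀ ξ : ℝ, volume (Set.Icc ξ (ξ + 1) ∩ S) ≤ ENNReal.ofReal B) {l : ℝ} (hl : 1 ≤ l) (ξ : ℝ) :
    ENNReal.ofReal (1 / l) * volume (Set.Icc ξ (ξ + l) ∩ S) ≤ ENNReal.ofReal (2 * B) := by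
  have hsub : Set.Icc ξ (ξ + l) ∩ S ⊆
      ⋃ k ∈ Finset.range (⌊l⌋₊ + 1), (Set.Icc (ξ + (k : ℝ)) (ξ + k + 1) ∩ S) := by
    rintro t ⟨⟨h1, h2⟩, h3⟩
    simp only [Set.mem_iUnion]
    refine ⟨⌊t - ξ⌋₊, ?_, ⟨?_, ?_⟩, h3⟩
    · rw [Finset.mem_range, Nat.lt_succ_iff]
      exact Nat.floor_mono (by linarith)
    · have := Nat.floor_le (sub_nonneg.2 h1)
      linarith
    · have := Nat.lt_floor_add_one (t - ξ)
      linarith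
  have hvol : volume (Set.Icc ξ (ξ + l) ∩ S) ≤ ENNReal.ofReal (2 * l * B) := by
    calc volume (Set.Icc ξ (ξ + l) ∩ S) ≤ _ := measure_mono hsub
      _ ≤ _ := measure_biUnion_finset_le _ _
      _ ≤ ∑ k ∈ Finset.range (⌊l⌋₊ + 1), ENNReal.ofReal B := Finset.sum_le_sum fun k _ => h _
      _ = ENNReal.ofReal (((⌊l⌋₊ + 1 : ℕ) : ℝ) * B) := by
        rw [Finset.sum_const, Finset.card_range, nsmul_eq_mul,
          ENNReal.ofReal_mul (Nat.cast_nonneg _), ENNReal.ofReal_natCast]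
      _ ≤ _ := by
        apply ENNReal.ofReal_le_ofReal
        apply mul_le_mul_of_nonneg_right _ hB
        have := Nat.floor_le (show 0 ≤ l by linarith)
        push_cast
        linarith
  calc _ ≤ ENNReal.ofReal (1 / l) * ENNReal.ofReal (2 * l * B) := by gcongr
    _ = ENNReal.ofReal (2 * B) := by
      rw [← ENNReal.ofReal_mul (by positivity)]
      congr 1
      field_simp

/-- **In `U = ℝⁿ`, condition 2) of the definition of `W̃_p` holds for every
`f ∈ M₁(ℝ, ℝⁿ)`:** for any `ε, δ > 0` there is a compact `K ⊆ ℝⁿ` with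
`κ_W({t : dist(f(t), K) ≥ ε}) < δ`. -/
theorem weyl_tilde_compactness_condition_euclidean (n : ℕ)
    (x₀ : EuclideanSpace ℝ (Fin n)) (f : ℝ → EuclideanSpace ℝ (Fin n))
    (hf : MemMp dist 1 x₀ f) :
    ∀ ε > (0 : ℝ), ∀ δ > (0 : ℝ), ∃ K : Set (EuclideanSpace ℝ (Fin n)),
      IsCompact K ∧
      kappaW {t | ENNReal.ofReal ε ≤ dInfDist dist (f t) K} < ENNReal.ofReal δ := by
  intro ε hε δ hδ
  obtain ⟨hm, C, hC⟩ := hf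
  set C' : ℝ := max C 0 + 1 with hC'
  have hC'pos : 0 < C' := by positivity
  have hCC : C ≤ C' := by have := le_max_left C 0; linarith
  set R : ℝ := 4 * C' / δ with hRdef
  have hR : 0 < R := by positivity
  refine ⟨Metric.closedBall x₀ R, isCompact_closedBall _ _, ?_⟩
  set S : Set ℝ := {t | ENNReal.ofReal R ≤ ENNReal.ofReal (dist (f t) x₀)} with hS
  have hTS : {t | ENNReal.ofReal ε ≤ dInfDist dist (f t) (Metric.closedBall x₀ R)} ⊆ S := by
    intro t ht
    by_contra hn
    have hlt : dist (f t) x₀ ≤ R := by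
      by_contra hc
      exact hn (ENNReal.ofReal_le_ofReal (not_le.1 hc).le)
    have h0 : dInfDist dist (f t) (Metric.closedBall x₀ R) ≤ ENNReal.ofReal (dist (f t) (f t)) :=
      iInf₂_le (f t) (Metric.mem_closedBall.2 hlt)
    have h1 : ENNReal.ofReal ε ≤ 0 := by
      have := le_trans ht h0
      simpa using this
    simp at h1
    linarith
  have hunit : ∀ ξ : ℝ, volume (Set.Icc ξ (ξ + 1) ∩ S) ≤ ENNReal.ofReal (C' / R) := by
    apply unit_bound_aux (g := fun t => dist (f t) x₀) _ hR
    · intro ξ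
      have := (hC ξ).trans (ENNReal.ofReal_le_ofReal hCC)
      simpa only [Real.rpow_one] using this
    · exact (hm.dist aestronglyMeasurable_const).aemeasurable.ennreal_ofReal
  have hle : kappaW {t | ENNReal.ofReal ε ≤ dInfDist dist (f t) (Metric.closedBall x₀ R)}
      ≤ ENNReal.ofReal (2 * (C' / R)) := by
    unfold kappaW
    apply Filter.limsup_le_of_le
    · isBoundedDefault
    filter_upwards [eventually_ge_atTop (1 : ℝ)] with l hl
    refine iSup_le fun ξ => le_trans ?_ (long_bound_aux (by positivity) hunit hl ξ)
    gcongr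
  refine hle.trans_lt ((ENNReal.ofReal_lt_ofReal_iff hδ).2 ?_)
  have : 2 * (C' / R) = δ / 2 := by
    rw [hRdef]
    field_simp
    norm_num
  linarith
end

section
/- Let (U,ρ) be a complete metric space, let g ∈ W̃(ℝ,U), and let F ∈ W̃_1(ℝ, (cl U, dist_{ρ'})) be such that T(ε) := P^{(ρ')}_1(ε; g) ∩ P^{(dist_{ρ'})}_1(ε; F) is relatively dense for all ε > 0. If h ∈ W_1(ℝ,ℝ) is a Weyl almost periodic real function whose frequency module Mod h is dense (and countable) in ℝ, then for every ε > 0 the set T(ε) ∩ P^{(ρ_ℝ)}_1(ε; h) is relatively dense. -/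
open MeasureTheory Filter Topology TopologicalSpace
open scoped ENNReal Pointwise

section helpers

lemma weylD_one {α : Type*} (d : α → α → ℝ) (l : ℝ) (f g : ℝ → α) :
    weylD d 1 l f g = ⨆ ξ : ℝ, ENNReal.ofReal (1 / l) *
      ∫⁻ t in Set.Icc ξ (ξ + l), ENNReal.ofReal (d (f t) (g t)) := by
  simp [weylD]

lemma lint_shift (G : ℝ → ℝ≥0∞) (c a b : ℝ) :
    ∫⁻ t in Set.Icc a b, G (t + c) = ∫⁻ t in Set.Icc (a + c) (b + c), G t := by
  have := (measurePreserving_add_right (volume : Measure ℝ) c).setLIntegral_comp_preimage_emb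
    (measurableEmbedding_addRight c) G (Set.Icc (a + c) (b + c))
  rw [← this]
  simp

lemma weylD_shift {α : Type*} (d : α → α → ℝ) (l c : ℝ) (f g : ℝ → α) :
    weylD d 1 l (fun t => f (t + c)) (fun t => g (t + c)) = weylD d 1 l f g := by
  rw [weylD_one, weylD_one]
  refine (Equiv.addRight c).iSup_congr fun ξ => ?_
  have := lint_shift (fun t => ENNReal.ofReal (d (f t) (g t))) c ξ (ξ + l)
  simp only [Equiv.coe_addRight]
  rw [this]
  congr 4
  ring

lemma weylD_triangle {α : Type*} (d : α → α → ℝ) (hd : ∀ x y z, d x z ≤ d x y + d y z)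
    (l : ℝ) (f g k : ℝ → α)
    (hm : AEMeasurable (fun t => ENNReal.ofReal (d (f t) (g t))) volume) :
    weylD d 1 l f k ≤ weylD d 1 l f g + weylD d 1 l g k := by
  simp only [weylD_one]
  refine iSup_le fun ξ => ?_
  calc ENNReal.ofReal (1 / l) * ∫⁻ t in Set.Icc ξ (ξ + l), ENNReal.ofReal (d (f t) (k t))
      ≤ ENNReal.ofReal (1 / l) * ∫⁻ t in Set.Icc ξ (ξ + l),
          (ENNReal.ofReal (d (f t) (g t)) + ENNReal.ofReal (d (g t) (k t))) := by
        gcongr with t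
        exact (ENNReal.ofReal_le_ofReal (hd _ (g t) _)).trans ENNReal.ofReal_add_le
    _ = ENNReal.ofReal (1 / l) * (∫⁻ t in Set.Icc ξ (ξ + l), ENNReal.ofReal (d (f t) (g t)))
        + ENNReal.ofReal (1 / l) * (∫⁻ t in Set.Icc ξ (ξ + l), ENNReal.ofReal (d (g t) (k t))) := by
        rw [lintegral_add_left' hm.restrict, mul_add]
    _ ≤ _ := add_le_add (le_iSup (fun ξ : ℝ => ENNReal.ofReal (1 / l) *
        (∫⁻ t in Set.Icc ξ (ξ + l), ENNReal.ofReal (d (f t) (g t)))) ξ)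
        (le_iSup (fun ξ : ℝ => ENNReal.ofReal (1 / l) *
        (∫⁻ t in Set.Icc ξ (ξ + l), ENNReal.ofReal (d (g t) (k t)))) ξ)

lemma weylD_comm {α : Type*} (d : α → α → ℝ) (hc : ∀ x y, d x y = d y x)
    (l : ℝ) (f g : ℝ → α) : weylD d 1 l f g = weylD d 1 l g f := by
  simp only [weylD_one, hc (f _)]

lemma weylD_mono {α : Type*} (d e : α → α → ℝ) (hc : ∀ x y, d x y ≤ e x y)
    (l : ℝ) (f g : ℝ → α) : weylD d 1 l f g ≤ weylD e 1 l f g := by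
  simp only [weylD_one]
  gcongr
  exact hc _ _

/-- A difference of almost periods is an almost period. -/
lemma aperiods_sub {α : Type*} (d : α → α → ℝ) (hd : ∀ x y z, d x z ≤ d x y + d y z)
    (hc : ∀ x y, d x y = d y x) (f : ℝ → α)
    (hm : ∀ σ τ : ℝ, AEMeasurable (fun t => ENNReal.ofReal (d (f (t + σ)) (f (t + τ)))) volume)
    {ε : ℝ} (hε : 0 < ε) {σ τ : ℝ} (hσ : σ ∈ APeriods d 1 (ε / 4) f)
    (hτ : τ ∈ APeriods d 1 (ε / 4) f) : τ - σ ∈ APeriods d 1 ε f := by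
  simp only [APeriods, Set.mem_ofPred_eq, weylDinf] at *
  have h1 := eventually_lt_of_limsup_lt hσ
  have h2 := eventually_lt_of_limsup_lt hτ
  have : limsup (fun l => weylD d 1 l f fun t => f (t + (τ - σ))) atTop
      ≤ ENNReal.ofReal (ε / 2) := by
    refine limsup_le_of_le (by isBoundedDefault) ?_
    filter_upwards [h1, h2] with l a1 a2
    rw [← weylD_shift d l σ f]
    have e : (fun t => f (t + σ + (τ - σ))) = fun t => f (t + τ) := by
      ext t; congr 1; ring
    rw [e]
    have hm0 := hm σ 0
    simp only [add_zero] at hm0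
    refine (weylD_triangle d hd l _ f _ hm0).trans ?_
    rw [weylD_comm d hc l _ f]
    have : ENNReal.ofReal (ε / 2) = ENNReal.ofReal (ε / 4) + ENNReal.ofReal (ε / 4) := by
      rw [← ENNReal.ofReal_add (by positivity) (by positivity)]; congr 1; ring
    rw [this]
    exact add_le_add a1.le a2.le
  exact this.trans_lt ((ENNReal.ofReal_lt_ofReal_iff hε).2 (by linarith))

lemma lint_cover (G : ℝ → ℝ≥0∞) (l : ℝ) (S : ℝ≥0∞)
    (hS : ∀ ξ, ∫⁻ t in Set.Icc ξ (ξ + l), G t ≤ S) (ξ : ℝ) (n : ℕ) :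
    ∫⁻ t in Set.Icc ξ (ξ + n * l), G t ≤ n * S := by
  induction n with
  | zero => simp
  | succ n ih =>
    calc ∫⁻ t in Set.Icc ξ (ξ + (n + 1 : ℕ) * l), G t
        ≤ ∫⁻ t in Set.Icc ξ (ξ + n * l) ∪ Set.Icc (ξ + n * l) (ξ + n * l + l), G t := by
          refine lintegral_mono_set fun x hx => ?_
          rcases le_total x (ξ + n * l) with h | h
          · exact Or.inl ⟨hx.1, h⟩
          · refine Or.inr ⟨h, hx.2.trans (le_of_eq ?_)⟩
            push_cast; ring
      _ ≤ _ := lintegral_union_le _ _ _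
      _ ≤ n * S + S := add_le_add ih (hS _)
      _ = _ := by push_cast; ring

lemma weylD_le_two {α : Type*} (d : α → α → ℝ) {l L : ℝ} (hl : 0 < l) (hL : l ≤ L)
    (f g : ℝ → α) : weylD d 1 L f g ≤ 2 * weylD d 1 l f g := by
  set W := weylD d 1 l f g with hW
  have hS : ∀ ξ, ∫⁻ t in Set.Icc ξ (ξ + l), ENNReal.ofReal (d (f t) (g t))
      ≤ ENNReal.ofReal l * W := by
    intro ξ
    have : ENNReal.ofReal (1 / l) *
      ∫⁻ t in Set.Icc ξ (ξ + l), ENNReal.ofReal (d (f t) (g t)) ≤ W := by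
      rw [hW, weylD_one]
      exact le_iSup (fun ξ : ℝ => ENNReal.ofReal (1 / l) *
        (∫⁻ t in Set.Icc ξ (ξ + l), ENNReal.ofReal (d (f t) (g t)))) ξ
    calc _ = ENNReal.ofReal l * (ENNReal.ofReal (1 / l) *
      ∫⁻ t in Set.Icc ξ (ξ + l), ENNReal.ofReal (d (f t) (g t))) := by
          rw [← mul_assoc, ← ENNReal.ofReal_mul hl.le, mul_one_div_cancel hl.ne']; simp
      _ ≤ _ := by gcongr
  have hLp : 0 < L := hl.trans_le hL
  rw [weylD_one]
  refine iSup_le fun ξ => ?_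
  set n := ⌈L / l⌉₊
  have hn1 : L ≤ n * l := by
    have := Nat.le_ceil (L / l)
    rwa [div_le_iff₀ hl] at this
  have hn2 : (n : ℝ) * l ≤ 2 * L := by
    have := (Nat.ceil_lt_add_one (div_pos hLp hl).le).le
    have h2 : (n : ℝ) * l ≤ (L / l + 1) * l := by gcongr
    rw [add_mul, div_mul_cancel₀ _ hl.ne'] at h2
    linarith
  calc _ ≤ ENNReal.ofReal (1 / L) * ∫⁻ t in Set.Icc ξ (ξ + n * l),
        ENNReal.ofReal (d (f t) (g t)) := by
          gcongr
    _ ≤ ENNReal.ofReal (1 / L) * (n * (ENNReal.ofReal l * W)) := by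
        gcongr; exact lint_cover _ l _ hS ξ n
    _ = ENNReal.ofReal (1 / L * (n * l)) * W := by
        rw [ENNReal.ofReal_mul (by positivity), ENNReal.ofReal_mul (by positivity),
          ENNReal.ofReal_natCast]
        ring
    _ ≤ ENNReal.ofReal 2 * W := by
        gcongr
        rw [one_div, inv_mul_le_iff₀ hLp]; linarith
    _ = _ := by simp

lemma weylDinf_le_two {α : Type*} (d : α → α → ℝ) {l : ℝ} (hl : 0 < l)
    (f g : ℝ → α) : weylDinf d 1 f g ≤ 2 * weylD d 1 l f g := by
  refine limsup_le_of_le (by isBoundedDefault) ?_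
  filter_upwards [eventually_ge_atTop l] with L hL using weylD_le_two d hl hL f g

lemma memMp_locInt (h : ℝ → ℝ) (hh : MemMp dist 1 (0 : ℝ) h) : LocallyIntegrable h volume := by
  obtain ⟨hm, C, hC⟩ := hh
  intro x
  refine ⟨Set.Icc (x - 1 / 2) (x - 1 / 2 + 1), Icc_mem_nhds (by linarith) (by linarith),
    hm.restrict, ?_⟩
  refine lt_of_le_of_lt (le_of_eq ?_) ((hC (x - 1 / 2)).trans_lt ENNReal.ofReal_lt_top)
  refine lintegral_congr fun t => ?_
  rw [Real.rpow_one, Real.dist_0_eq_abs, ← Real.norm_eq_abs, ofReal_norm]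

lemma trans_cont (h : ℝ → ℝ) (hh : LocallyIntegrable h volume) (L η : ℝ) (hL : 0 < L)
    (hη : 0 < η) : ∃ δ > 0, ∀ σ : ℝ, |σ| < δ →
      ∫⁻ t in Set.Icc 0 L, ENNReal.ofReal (dist (h t) (h (t + σ))) ≤ ENNReal.ofReal η := by
  set h1 : ℝ → ℝ := (Set.Icc (-1) (L + 1)).indicator h with hh1
  have hi : Integrable h1 volume :=
    (hh.integrableOn_isCompact isCompact_Icc).integrable_indicator measurableSet_Icc
  obtain ⟨φ, hφs, hφ, hφc, hφi⟩ := hi.exists_hasCompactSupport_lintegral_sub_le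
    (ε := ENNReal.ofReal (η / 3)) (by simpa using by positivity)
  have huc := hφs.uniformContinuous_of_continuous hφc
  obtain ⟨δ, hδ, hδφ⟩ := Metric.uniformContinuous_iff.1 huc (η / (3 * L)) (by positivity)
  refine ⟨min δ 1, by positivity, fun σ hσ => ?_⟩
  have hσ1 : |σ| < 1 := hσ.trans_le (min_le_right _ _)
  have hσδ : |σ| < δ := hσ.trans_le (min_le_left _ _)
  rw [abs_lt] at hσ1
  have key : ∀ t ∈ Set.Icc 0 L, ENNReal.ofReal (dist (h t) (h (t + σ))) ≤
      ‖h1 t - φ t‖ₑ + (ENNReal.ofReal (η / (3 * L)) + ‖h1 (t + σ) - φ (t + σ)‖ₑ) := by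
    intro t ht
    have e1 : h1 t = h t := Set.indicator_of_mem (Set.mem_Icc.2 ⟨by linarith [ht.1], by linarith [ht.2]⟩) _
    have e2 : h1 (t + σ) = h (t + σ) :=
      Set.indicator_of_mem (Set.mem_Icc.2 ⟨by linarith [ht.1], by linarith [ht.2]⟩) _
    have e3 : dist (φ t) (φ (t + σ)) < η / (3 * L) := by
      apply hδφ; simpa [Real.dist_eq] using hσδ
    rw [e1, e2, ← ofReal_norm, ← ofReal_norm, ← ENNReal.ofReal_add (by positivity) (by positivity),
      ← ENNReal.ofReal_add (by positivity) (by positivity)]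
    apply ENNReal.ofReal_le_ofReal
    rw [← dist_eq_norm, ← dist_eq_norm]
    have := dist_triangle4 (h t) (φ t) (φ (t + σ)) (h (t + σ))
    rw [dist_comm (φ (t + σ))] at this
    linarith
  have m1 : AEMeasurable (fun t => ‖h1 t - φ t‖ₑ) volume :=
    (hi.aestronglyMeasurable.sub hφi.aestronglyMeasurable).enorm
  calc _ ≤ ∫⁻ t in Set.Icc 0 L, (‖h1 t - φ t‖ₑ +
        (ENNReal.ofReal (η / (3 * L)) + ‖h1 (t + σ) - φ (t + σ)‖ₑ)) :=
        setLIntegral_mono' measurableSet_Icc key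
    _ = (∫⁻ t in Set.Icc 0 L, ‖h1 t - φ t‖ₑ) + ((∫⁻ t in Set.Icc 0 L, ENNReal.ofReal (η / (3 * L)))
        + ∫⁻ t in Set.Icc 0 L, ‖h1 (t + σ) - φ (t + σ)‖ₑ) := by
        rw [lintegral_add_left' m1.restrict, lintegral_add_left measurable_const]
    _ ≤ ENNReal.ofReal (η / 3) + (ENNReal.ofReal (η / 3) + ENNReal.ofReal (η / 3)) := by
        refine add_le_add ((setLIntegral_le_lintegral _ _).trans hφ) (add_le_add ?_ ?_)
        · rw [setLIntegral_const, Real.volume_Icc, ← ENNReal.ofReal_mul (by positivity)]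
          apply ENNReal.ofReal_le_ofReal
          apply le_of_eq; field_simp; ring
        · refine (setLIntegral_le_lintegral _ _).trans ?_
          rw [lintegral_add_right_eq_self (fun t => ‖h1 t - φ t‖ₑ) σ]
          exact hφ
    _ = _ := by
        rw [← ENNReal.ofReal_add (by positivity) (by positivity),
          ← ENNReal.ofReal_add (by positivity) (by positivity)]
        congr 1; ring

lemma aem_dist (h : ℝ → ℝ) (hm : AEStronglyMeasurable h volume) (σ τ : ℝ) :
    AEMeasurable (fun t => ENNReal.ofReal (dist (h (t + σ)) (h (t + τ)))) volume := by
  have a (σ : ℝ) : AEStronglyMeasurable (fun t => h (t + σ)) volume :=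
    hm.comp_quasiMeasurePreserving (measurePreserving_add_right volume σ).quasiMeasurePreserving
  exact ((a σ).dist (a τ)).aemeasurable.ennreal_ofReal

/-- Uniform translation continuity of Weyl almost periodic functions. -/
lemma weyl_unif (h : ℝ → ℝ) (hh : MemMp dist 1 (0 : ℝ) h) {l ε : ℝ} (hl : 0 < l) (hε : 0 < ε)
    (hr : RelDense (APeriodsL dist 1 l ε h)) :
    ∃ δ > 0, ∀ σ : ℝ, |σ| < δ →
      weylD dist 1 l h (fun t => h (t + σ)) ≤ ENNReal.ofReal (3 * ε) := by
  obtain ⟨b, hb, hr⟩ := hr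
  obtain ⟨δ, hδ, H⟩ := trans_cont h (memMp_locInt h hh) (b + l) (l * ε) (by positivity)
    (by positivity)
  refine ⟨δ, hδ, fun σ hσ => ?_⟩
  rw [weylD_one]
  refine iSup_le fun ξ => ?_
  obtain ⟨s, hs, hsp⟩ := hr (-ξ)
  have hsp' : weylD dist 1 l h (fun t => h (t + s)) ≤ ENNReal.ofReal ε := le_of_lt hsp
  have hsp2 : weylD dist 1 l (fun t => h (t + σ)) (fun t => h (t + σ + s)) ≤ ENNReal.ofReal ε := by
    rw [weylD_shift dist l σ h (fun t => h (t + s))]; exact hsp'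
  rw [weylD_one] at hsp' hsp2
  have A := (iSup_le_iff.1 hsp') ξ
  have B := (iSup_le_iff.1 hsp2) ξ
  have m1 := aem_dist h hh.1 0 s
  have m2 := aem_dist h hh.1 s (σ + s)
  simp only [add_zero, ← add_assoc] at m1 m2
  have Cc : ∫⁻ t in Set.Icc ξ (ξ + l), ENNReal.ofReal (dist (h (t + s)) (h (t + σ + s)))
      ≤ ENNReal.ofReal (l * ε) := by
    have e := lint_shift (fun u => ENNReal.ofReal (dist (h u) (h (u + σ)))) s ξ (ξ + l)
    have e2 : ∀ t, t + s + σ = t + σ + s := fun t => by ring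
    simp only [e2] at e
    rw [e]
    refine (lintegral_mono_set ?_).trans (H σ hσ)
    exact Set.Icc_subset_Icc (by linarith [hs.1]) (by linarith [hs.2])
  calc _ ≤ ENNReal.ofReal (1 / l) * ∫⁻ t in Set.Icc ξ (ξ + l),
        (ENNReal.ofReal (dist (h t) (h (t + s))) +
        (ENNReal.ofReal (dist (h (t + s)) (h (t + σ + s))) +
          ENNReal.ofReal (dist (h (t + σ)) (h (t + σ + s))))) := by
        gcongr with t
        rw [← ENNReal.ofReal_add (by positivity) (by positivity),
          ← ENNReal.ofReal_add (by positivity) (by positivity)]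
        apply ENNReal.ofReal_le_ofReal
        have := dist_triangle4 (h t) (h (t + s)) (h (t + σ + s)) (h (t + σ))
        rw [dist_comm (h (t + σ + s))] at this
        linarith
    _ = ENNReal.ofReal (1 / l) * (∫⁻ t in Set.Icc ξ (ξ + l),
        ENNReal.ofReal (dist (h t) (h (t + s)))) +
        (ENNReal.ofReal (1 / l) * (∫⁻ t in Set.Icc ξ (ξ + l),
        ENNReal.ofReal (dist (h (t + s)) (h (t + σ + s)))) +
        ENNReal.ofReal (1 / l) * (∫⁻ t in Set.Icc ξ (ξ + l),
        ENNReal.ofReal (dist (h (t + σ)) (h (t + σ + s))))) := by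
        rw [lintegral_add_left' m1.restrict, lintegral_add_left' m2.restrict, mul_add, mul_add]
    _ ≤ ENNReal.ofReal ε + (ENNReal.ofReal (1 / l) * ENNReal.ofReal (l * ε) +
        ENNReal.ofReal ε) := by gcongr
    _ = _ := by
        rw [← ENNReal.ofReal_mul (by positivity), ← ENNReal.ofReal_add (by positivity) (by positivity),
          ← ENNReal.ofReal_add (by positivity) (by positivity)]
        congr 1; field_simp; ring

lemma bdist_le {α : Type*} [PseudoMetricSpace α] (x y : α) : bdist x y ≤ dist x y :=
  min_le_right _ _

/-- Total boundedness of the set of translates. -/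
lemma weyl_totbdd (h : ℝ → ℝ) (hh : MemWp dist 1 (0 : ℝ) h) {ε : ℝ} (hε : 0 < ε) :
    ∃ (N : ℕ) (c : ℝ → Fin N), ∀ σ τ, c σ = c τ → τ - σ ∈ APeriods bdist 1 ε h := by
  obtain ⟨hM, hW⟩ := hh
  obtain ⟨l, hl, hr⟩ := hW (ε / 20) (by positivity)
  obtain ⟨δ, hδ, hu⟩ := weyl_unif h hM hl (by positivity) hr
  obtain ⟨b, hb, hr⟩ := hr
  choose s hs hsp using fun τ : ℝ => hr (-τ)
  have hs1 : ∀ τ, 0 ≤ τ + s τ := fun τ => by linarith [(hs τ).1]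
  have hs2 : ∀ τ, τ + s τ ≤ b := fun τ => by linarith [(hs τ).2]
  refine ⟨⌊b / δ⌋₊ + 1, fun τ => ⟨⌊(τ + s τ) / δ⌋₊, Nat.lt_succ_of_le (Nat.floor_le_floor
    (by gcongr; exact hs2 τ))⟩, fun σ τ hst => ?_⟩
  have hst' : ⌊(σ + s σ) / δ⌋₊ = ⌊(τ + s τ) / δ⌋₊ := by simpa using hst
  have hclose : |(τ + s τ) - (σ + s σ)| < δ := by
    have a1 := Nat.floor_le (div_nonneg (hs1 σ) hδ.le)
    have a2 := Nat.floor_le (div_nonneg (hs1 τ) hδ.le)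
    have a3 := Nat.lt_floor_add_one ((σ + s σ) / δ)
    have a4 := Nat.lt_floor_add_one ((τ + s τ) / δ)
    rw [hst'] at a1 a3
    have : |(τ + s τ) / δ - (σ + s σ) / δ| < 1 := by rw [abs_lt]; constructor <;> linarith
    rwa [← sub_div, abs_div, abs_of_pos hδ, div_lt_one hδ] at this
  have tri := weylD_triangle (dist : ℝ → ℝ → ℝ) dist_triangle l
  have P : ∀ τ, weylD dist 1 l (fun t => h (t + τ)) (fun t => h (t + (τ + s τ)))
      ≤ ENNReal.ofReal (ε / 20) := by
    intro τ
    have e : (fun t => h (t + (τ + s τ))) = fun t => (fun u => h (u + s τ)) (t + τ) := by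
      ext t; simp only; congr 1; ring
    rw [e, weylD_shift dist l τ h (fun u => h (u + s τ))]
    exact le_of_lt (hsp τ)
  have Q : weylD dist 1 l (fun t => h (t + (σ + s σ))) (fun t => h (t + (τ + s τ)))
      ≤ ENNReal.ofReal (3 * (ε / 20)) := by
    have e : (fun t => h (t + (τ + s τ))) =
        fun t => (fun u => h (u + ((τ + s τ) - (σ + s σ)))) (t + (σ + s σ)) := by
      ext t; simp only; congr 1; ring
    rw [e, weylD_shift dist l (σ + s σ) h (fun u => h (u + ((τ + s τ) - (σ + s σ))))]
    exact hu _ hclose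
  have R : weylD dist 1 l (fun t => h (t + σ)) (fun t => h (t + τ)) ≤ ENNReal.ofReal (ε / 4) := by
    have t1 := tri (fun t => h (t + σ)) (fun t => h (t + (σ + s σ))) (fun t => h (t + τ))
      (aem_dist h hM.1 _ _)
    have t2 := tri (fun t => h (t + (σ + s σ))) (fun t => h (t + (τ + s τ))) (fun t => h (t + τ))
      (aem_dist h hM.1 _ _)
    rw [weylD_comm dist dist_comm l (fun t => h (t + (τ + s τ)))] at t2
    refine (t1.trans (add_le_add (P σ) (t2.trans (add_le_add Q (P τ))))).trans (le_of_eq ?_)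
    rw [← ENNReal.ofReal_add (by positivity) (by positivity),
          ← ENNReal.ofReal_add (by positivity) (by positivity)]
    congr 1; ring
  have e : (fun t => h (t + τ)) = fun t => (fun u => h (u + (τ - σ))) (t + σ) := by
    ext t; simp only; congr 1; ring
  rw [e, weylD_shift dist l σ h (fun u => h (u + (τ - σ)))] at R
  change weylDinf bdist 1 h (fun u => h (u + (τ - σ))) < ENNReal.ofReal ε
  calc _ ≤ 2 * weylD bdist 1 l h (fun u => h (u + (τ - σ))) := weylDinf_le_two _ hl _ _
    _ ≤ ENNReal.ofReal 2 * ENNReal.ofReal (ε / 4) := by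
        rw [ENNReal.ofReal_ofNat]
        gcongr
        exact (weylD_mono _ _ bdist_le l _ _).trans R
    _ = ENNReal.ofReal (2 * (ε / 4)) := (ENNReal.ofReal_mul (by norm_num)).symm
    _ < _ := (ENNReal.ofReal_lt_ofReal_iff hε).2 (by linarith)

lemma bdist_comm {α : Type*} [PseudoMetricSpace α] (x y : α) : bdist x y = bdist y x := by
  simp only [bdist, dist_comm x y]

lemma bdist_triangle {α : Type*} [PseudoMetricSpace α] (x y z : α) :
    bdist x z ≤ bdist x y + bdist y z := by
  simp only [bdist]
  have := dist_triangle x y z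
  have h1 := dist_nonneg (x := x) (y := y)
  have h2 := dist_nonneg (x := y) (y := z)
  rcases min_cases 1 (dist x y) with h | h <;> rcases min_cases 1 (dist y z) with h' | h' <;>
    rcases min_cases 1 (dist x z) with h'' | h'' <;> linarith

lemma clDist_eq {α : Type*} [MetricSpace α] (A B : Closeds α) :
    clDist A B = (min 1 (edist A B)).toReal := rfl

lemma clDist_comm {α : Type*} [MetricSpace α] (A B : Closeds α) : clDist A B = clDist B A := by
  rw [clDist_eq, clDist_eq, edist_comm]

lemma clDist_triangle {α : Type*} [MetricSpace α] (A B C : Closeds α) :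
    clDist A C ≤ clDist A B + clDist B C := by
  simp only [clDist_eq]
  have f : ∀ x : ℝ≥0∞, min 1 x ≠ ⊤ := fun x => ne_top_of_le_ne_top ENNReal.one_ne_top (min_le_left _ _)
  rw [← ENNReal.toReal_add (f _) (f _)]
  refine ENNReal.toReal_mono (ENNReal.add_ne_top.2 ⟨f _, f _⟩) ?_
  rcases le_total 1 (edist A B) with h | h
  · rw [min_eq_left h]; exact (min_le_left _ _).trans le_self_add
  rcases le_total 1 (edist B C) with h' | h'
  · rw [min_eq_left h']; exact (min_le_left _ _).trans le_add_self
  rw [min_eq_right h, min_eq_right h']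
  exact (min_le_right _ _).trans (edist_triangle _ _ _)

lemma aem_bdist {α : Type*} [PseudoMetricSpace α] (h : ℝ → α)
    (hm : AEStronglyMeasurable h volume) (σ τ : ℝ) :
    AEMeasurable (fun t => ENNReal.ofReal (bdist (h (t + σ)) (h (t + τ)))) volume := by
  have a (σ : ℝ) : AEStronglyMeasurable (fun t => h (t + σ)) volume :=
    hm.comp_quasiMeasurePreserving (measurePreserving_add_right volume σ).quasiMeasurePreserving
  exact (aemeasurable_const.min ((a σ).dist (a τ)).aemeasurable).ennreal_ofReal

lemma aem_clDist {α : Type*} [MetricSpace α] (h : ℝ → Closeds α)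
    (hm : AEStronglyMeasurable h volume) (σ τ : ℝ) :
    AEMeasurable (fun t => ENNReal.ofReal (clDist (h (t + σ)) (h (t + τ)))) volume := by
  have a (σ : ℝ) : AEStronglyMeasurable (fun t => h (t + σ)) volume :=
    hm.comp_quasiMeasurePreserving (measurePreserving_add_right volume σ).quasiMeasurePreserving
  have b := (continuous_edist (α := Closeds α)).comp_aestronglyMeasurable ((a σ).prodMk (a τ))
  exact (aemeasurable_const.min b.aemeasurable).ennreal_toReal.ennreal_ofReal

/-- Pigeonhole argument. -/
lemma relDense_pigeon (T P : Set ℝ) (hT : RelDense T) (N : ℕ) (c : ℝ → Fin N)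
    (H : ∀ σ ∈ T, ∀ τ ∈ T, c σ = c τ → τ - σ ∈ P) : RelDense P := by
  classical
  obtain ⟨a, ha, hT⟩ := hT
  choose t ht htT using hT
  have : ∃ r : Fin N → ℝ, ∀ ξ, r (c (t ξ)) ∈ T ∧ c (r (c (t ξ))) = c (t ξ) := by
    refine ⟨fun i => if hi : ∃ ξ, c (t ξ) = i then t hi.choose else 0, fun ξ => ?_⟩
    have hi : ∃ ξ', c (t ξ') = c (t ξ) := ⟨ξ, rfl⟩
    simp only [dif_pos hi]
    exact ⟨htT _, hi.choose_spec⟩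
  obtain ⟨r, hr⟩ := this
  set R := ∑ i, |r i|
  have hR : ∀ i, |r i| ≤ R := fun i =>
    Finset.single_le_sum (f := fun i => |r i|) (fun _ _ => abs_nonneg _) (Finset.mem_univ i)
  have hR0 : 0 ≤ R := Finset.sum_nonneg fun _ _ => abs_nonneg _
  refine ⟨a + 2 * R, by positivity, fun ξ => ?_⟩
  have hb := abs_le.1 (hR (c (t (ξ + R))))
  have h1 := ht (ξ + R)
  refine ⟨t (ξ + R) - r (c (t (ξ + R))), ⟨by linarith [h1.1], by linarith [h1.2]⟩, ?_⟩
  exact H _ (hr _).1 _ (htT _) (hr _).2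

end helpers

open TopologicalSpace in
/-- **Relative density of `𝒯(ε) ∩ P^{(ρ_ℝ)}₁(ε; h)`.**
Let `g ∈ W̃(ℝ,U)` and `F ∈ W̃₁(ℝ, (cl U, dist_{ρ'}))` be such that
`𝒯(ε) = P^{(ρ')}₁(ε; g) ∩ P^{(dist_{ρ'})}₁(ε; F)` is relatively dense for all `ε > 0`.
If `h ∈ W₁(ℝ,ℝ)` has a dense (and countable) frequency module `Mod h`, then
`𝒯(ε) ∩ P^{(ρ_ℝ)}₁(ε; h)` is relatively dense for every `ε > 0`. -/
theorem weyl_tilde_almost_periods_with_scalar {U : Type*} [MetricSpace U]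
    [CompleteSpace U] (x₀ : U)
    (g : ℝ → U) (hg : MemWpTilde bdist 1 x₀ g)
    (F : ℝ → Closeds U) (hFne : ∀ t : ℝ, (F t : Set U).Nonempty)
    (hF : MemWpTilde clDist 1 (⟨{x₀}, isClosed_singleton⟩ : Closeds U) F)
    (hT : ∀ ε > (0 : ℝ), RelDense (APeriods bdist 1 ε g ∩ APeriods clDist 1 ε F))
    (h : ℝ → ℝ) (hh : MemWp dist 1 (0 : ℝ) h)
    (hhdense : Dense (WMod bdist h)) (hhcount : (WMod bdist h).Countable) :
    ∀ ε > (0 : ℝ),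
      RelDense ((APeriods bdist 1 ε g ∩ APeriods clDist 1 ε F) ∩
        APeriods bdist 1 ε h) := by
  intro ε hε
  obtain ⟨N, c, hc⟩ := weyl_totbdd h hh hε
  refine relDense_pigeon _ _ (hT (ε / 4) (by positivity)) N c fun σ hσ τ hτ hst =>
    ⟨⟨?_, ?_⟩, hc σ τ hst⟩
  · exact aperiods_sub bdist bdist_triangle bdist_comm g (aem_bdist g hg.1.1) hε hσ.1 hτ.1
  · exact aperiods_sub clDist clDist_triangle clDist_comm F (aem_clDist F hF.1.1) hε hσ.2 hτ.2
end
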